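/- The subsets M = {6,9,11,12,13,16,22,23,30,31,32,34,35,38,39,40,43,45,50,52,54,56,58,60,62,63,64,65,67,69,70,74,75,78,82,83,84,85,86,87,90,91,92,93,94,96,97,101,103,104,106,107,108,109,110} and N = {0,1,2,4,5,6,7,10,11,14,16,18,21,24,30,31,32,33,35,36,39,43,44,45,49,51,52,54,57,59,60,62,66,67,68,72,75,76,78,79,80,81,87,90,93,95,97,100,101,104,105,106,107,109,110} of ℤ/111ℤ form a Legendre pair of length 111: each has 55 elements, and for every nonzero c ∈ ℤ/111ℤ, #{(a,a') ∈ M × M : a − a' = c} + #{(b,b') ∈ N × N : b − b' = c} = 54. Moreover M is skew (0 ∉ M and i ∈ M implies −i ∉ M) and N is symmetric (−N = N). -/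

import Mathlib

/-- The number of pairs of elements of `X` with difference `c` is the number of `a ∈ X` with
`a - c ∈ X`. -/
theorem card_filter_sub_eq {G : Type*} [AddCommGroup G] [DecidableEq G] (X : Finset G) (c : G) :
    ((X ×ˢ X).filter (fun p => p.1 - p.2 = c)).card = (X.filter (fun a => a - c ∈ X)).card := by
  refine Finset.card_bij' (fun p _ => p.1) (fun a _ => (a, a - c)) ?_ ?_ ?_ ?_
  · rintro ⟨a, b⟩ h
    simp only [Finset.mem_filter, Finset.mem_product] at h ⊢
    obtain ⟨⟨ha, hb⟩, rfl⟩ := h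
    simpa using ⟨ha, hb⟩
  · intro a h
    simp only [Finset.mem_filter, Finset.mem_product] at h ⊢
    exact ⟨h, sub_sub_cancel a c⟩
  · rintro ⟨a, b⟩ h
    simp only [Finset.mem_filter] at h
    simp [← h.2]
  · simp

/-- The periodic autocorrelation at shift `c` of the subset of `ℤ/v` coded by the binary digits
of `m`. -/
def bitAutocorrelation (v m c : ℕ) : ℕ :=
  Nat.count (fun a => (m.testBit a && m.testBit ((a + (v - c)) % v)) = true) v

theorem card_filter_sub_eq_bitAutocorrelation {v : ℕ} [NeZero v] {X : Finset (ZMod v)} {m : ℕ}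
    (hX : ∀ a : ZMod v, a ∈ X ↔ m.testBit a.val = true) (c : ZMod v) :
    ((X ×ˢ X).filter (fun p => p.1 - p.2 = c)).card = bitAutocorrelation v m c.val := by
  have hval (a : ℕ) (ha : a < v) : ((a : ZMod v) - c).val = (a + (v - c.val)) % v := by
    rw [← ZMod.val_natCast, Nat.cast_add, Nat.cast_sub c.val_lt.le]
    simp [sub_eq_add_neg]
  rw [card_filter_sub_eq, bitAutocorrelation, Nat.count_eq_card_filter_range]
  refine Finset.card_bij' (fun a _ => a.val) (fun a _ => (a : ZMod v)) ?_ ?_ ?_ ?_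
  · intro a h
    have := hval a.val a.val_lt
    simp_all [ZMod.val_lt]
  · intro a h
    simp only [Finset.mem_filter, Finset.mem_range, Bool.and_eq_true] at h
    simp only [Finset.mem_filter, hX, hval a h.1, ZMod.val_cast_of_lt h.1, h.2, and_self]
  · simp
  · intro a h
    simp only [Finset.mem_filter, Finset.mem_range] at h
    exact ZMod.val_cast_of_lt h.1

/-- The Szekeres difference sets `M` and `N` form a Legendre pair of length
`111`, with `M` skew and `N` symmetric. -/
theorem szekeres_legendre_pair_111 :
    let M : Finset (ZMod 111) :=
      {6,9,11,12,13,16,22,23,30,31,32,34,35,38,39,40,43,45,50,52,54,56,58,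
       60,62,63,64,65,67,69,70,74,75,78,82,83,84,85,86,87,90,91,92,93,94,96,97,
       101,103,104,106,107,108,109,110}
    let N : Finset (ZMod 111) :=
      {0,1,2,4,5,6,7,10,11,14,16,18,21,24,30,31,32,33,35,36,39,43,44,45,49,
       51,52,54,57,59,60,62,66,67,68,72,75,76,78,79,80,81,87,90,93,95,97,100,
       101,104,105,106,107,109,110}
    M.card = 55 ∧ N.card = 55 ∧
    (∀ c : ZMod 111, c ≠ 0 →
      ((M ×ˢ M).filter (fun p => p.1 - p.2 = c)).card +
      ((N ×ˢ N).filter (fun p => p.1 - p.2 = c)).card = 54) ∧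
    ((0 : ZMod 111) ∉ M ∧ ∀ i ∈ M, -i ∉ M) ∧
    N.image (fun x => -x) = N := by
  intro M N
  have hM : ∀ a : ZMod 111, a ∈ M ↔ Nat.testBit 2548254072097697305967599732996672 a.val = true := by
    decide +kernel
  have hN : ∀ a : ZMod 111, a ∈ N ↔ Nat.testBit 2255359789067218250240744648690935 a.val = true := by
    decide +kernel
  refine ⟨by decide +kernel, by decide +kernel, fun c hc => ?_,
    ⟨by decide +kernel, by decide +kernel⟩, by decide +kernel⟩
  rw [card_filter_sub_eq_bitAutocorrelation hM, card_filter_sub_eq_bitAutocorrelation hN]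
  revert c
  decide +kernel
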